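/- Let s ≥ 0. There exists a constant C > 0 such that for all smooth ℤ²-periodic functions f, g : ℝ² → ℂ, one has ‖fg‖_{H^s} ≤ C( ‖f‖_{L^∞} ‖g‖_{H^s} + ‖g‖_{L^∞} ‖f‖_{H^s} ), where ‖f‖_{L^∞} = sup_{x∈ℝ²} |f(x)|. -/

import Mathlib

open MeasureTheory Real ENNReal

/-- The `k`-th Fourier coefficient of a `ℤ²`-periodic function `f : ℝ² → ℂ`. -/
noncomputable def fourierCoef (f : (Fin 2 → ℝ) → ℂ) (k : Fin 2 → ℤ) : ℂ :=
  ∫ x in Set.Icc (0 : Fin 2 → ℝ) 1,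
    f x * Complex.exp (-(2 * Real.pi * Complex.I) * ((∑ i, (k i : ℝ) * x i : ℝ) : ℂ))

/-- The `H^s` norm of a `ℤ²`-periodic function, defined via Fourier coefficients,
valued in `[0,∞]`. -/
noncomputable def sobolevNorm (s : ℝ) (f : (Fin 2 → ℝ) → ℂ) : ℝ≥0∞ :=
  (∑' k : Fin 2 → ℤ,
    ENNReal.ofReal ((1 + ∑ i, ((k i : ℝ)) ^ 2) ^ s * ‖fourierCoef f k‖ ^ 2)) ^ (1/2 : ℝ)

/-!
A monotone function of `|k|` is a nonnegative combination of the indicators of `{|k| ≥ N}`. Since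
the Sobolev weight is such a function up to a constant, it is enough to bound, for every `N`, the
`ℓ²` tail of the Fourier coefficients of `FG` over `|k| ≥ 4N` by the tails of those of `F` and `G`
over `|k| ≥ N`, with factors `‖G‖_∞` and `‖F‖_∞`.

Let `V` be the de la Vallée Poussin mean whose multiplier is `1` for `|k| < N` and `0` for
`|k| ≥ 2N`. The product `VF · VG` has no frequencies `|k| ≥ 4N`, so the tail of `FG` is at most the
`L²` norm of `FG - VF · VG = G (F - VF) + VF (G - VG)`, and Parseval bounds `F - VF` and `G - VG` by
tails. It remains that `V` is bounded in the sup norm uniformly in `N`: its kernel is a product of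
two Dirichlet kernels, whose `L²` norms are known, and Cauchy–Schwarz applies.
-/

section LayerCake

variable {ι : Type*} {w : ℕ → ℝ≥0∞}

lemma exists_eq_sum_range_succ_of_monotone (hw : Monotone w) :
    ∃ a : ℕ → ℝ≥0∞, ∀ n, w n = ∑ N ∈ Finset.range (n + 1), a N := by
  refine ⟨fun n => Nat.casesOn n (w 0) fun n => w (n + 1) - w n, fun n => ?_⟩
  induction n with
  | zero => simp
  | succ n ih => rw [Finset.sum_range_succ, ← ih, add_tsub_cancel_of_le (hw n.le_succ)]

lemma tsum_comp_mul_eq_tsum_mul_tail {a : ℕ → ℝ≥0∞}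
    (ha : ∀ n, w n = ∑ N ∈ Finset.range (n + 1), a N) (m : ι → ℕ) (u : ι → ℝ≥0∞) :
    ∑' i, w (m i) * u i = ∑' N, a N * ∑' i : {i | N ≤ m i}, u i := by
  have weight_eq (i : ι) : w (m i) = ∑' N, (Set.Iic (m i)).indicator a N := by
    rw [ha, ← Finset.tsum_subtype', tsum_subtype]
    congr! 4
    ext N
    simp
  simp_rw [weight_eq, tsum_subtype, ← ENNReal.tsum_mul_right, ← ENNReal.tsum_mul_left]
  rw [ENNReal.tsum_comm]
  refine tsum_congr fun N => tsum_congr fun i => ?_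
  by_cases h : N ≤ m i <;> simp [h]

lemma tsum_monotone_comp_mul_le {κ : Type*} (hw : Monotone w) {p : ι → ℕ} {q : κ → ℕ}
    {u : ι → ℝ≥0∞} {v : κ → ℝ≥0∞}
    (h : ∀ N, ∑' i : {i | N ≤ p i}, u i ≤ ∑' j : {j | N ≤ q j}, v j) :
    ∑' i, w (p i) * u i ≤ ∑' j, w (q j) * v j := by
  obtain ⟨a, ha⟩ := exists_eq_sum_range_succ_of_monotone hw
  rw [tsum_comp_mul_eq_tsum_mul_tail ha, tsum_comp_mul_eq_tsum_mul_tail ha]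
  exact ENNReal.tsum_le_tsum fun N => mul_le_mul_right (h N) _

end LayerCake

section Periodization

variable {d : Type*}

lemma isOpenQuotientMap_coe_unitAddTorus :
    IsOpenQuotientMap fun (x : d → ℝ) i => (x i : UnitAddCircle) :=
  IsOpenQuotientMap.piMap fun _ => QuotientAddGroup.isOpenQuotientMap_mk

lemma exists_unitAddTorus_lift {X : Type*} [TopologicalSpace X] {f : (d → ℝ) → X}
    (hf : Continuous f) (hper : ∀ (x : d → ℝ) (m : d → ℤ), f (x + fun i => (m i : ℝ)) = f x) :
    ∃ F : C(UnitAddTorus d, X), ∀ x : d → ℝ, F (fun i => (x i : UnitAddCircle)) = f x := by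
  let proj : C(d → ℝ, UnitAddTorus d) := ⟨_, isOpenQuotientMap_coe_unitAddTorus.continuous⟩
  have hproj : Topology.IsQuotientMap proj := isOpenQuotientMap_coe_unitAddTorus.isQuotientMap
  have factors : Function.FactorsThrough f proj := fun x y hxy => by
    have exists_int (i : d) : ∃ m : ℤ, x i = y i + m := by
      have hi : ((x i - y i : ℝ) : UnitAddCircle) = 0 := by
        rw [AddCircle.coe_sub, sub_eq_zero]
        exact congr_fun hxy i
      obtain ⟨m, hm⟩ := (AddCircle.coe_eq_zero_iff 1).1 hi
      refine ⟨m, ?_⟩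
      rw [zsmul_one] at hm
      linarith
    choose m hm using exists_int
    rw [← hper y m, funext hm]
    rfl
  exact ⟨hproj.lift ⟨f, hf⟩ factors,
    fun x => DFunLike.congr_fun (hproj.lift_comp ⟨f, hf⟩ factors) x⟩

lemma norm_eq_iSup_of_unitAddTorus_lift {E : Type*} [NormedAddCommGroup E] {f : (d → ℝ) → E}
    {F : C(UnitAddTorus d, E)} (hF : ∀ x : d → ℝ, F (fun i => (x i : UnitAddCircle)) = f x) :
    ‖F‖ = ⨆ x, ‖f x‖ := by
  rw [ContinuousMap.norm_eq_iSup_norm,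
    ← isOpenQuotientMap_coe_unitAddTorus.surjective.iSup_comp]
  simp_rw [hF]

end Periodization

section Torus

attribute [local instance] instMeasureSpaceUnitAddCircle
  instIsProbabilityMeasureUnitAddCircleVolume

open UnitAddTorus ComplexConjugate
open scoped Pointwise Finset

variable {d : Type*} [Fintype d]

/-- The class in `L²(𝕋ᵈ)` of a continuous function on the torus. -/
noncomputable abbrev toL2 :
    C(UnitAddTorus d, ℂ) →L[ℂ] Lp ℂ 2 (volume : Measure (UnitAddTorus d)) :=
  ContinuousMap.toLp 2 volume ℂ

/-- The `k`-th Fourier coefficient of a continuous function on `𝕋ᵈ`, as a linear functional; it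
agrees with `UnitAddTorus.mFourierCoeff`. -/
noncomputable def torusCoeff (k : d → ℤ) : C(UnitAddTorus d, ℂ) →L[ℂ] ℂ :=
  (innerSL ℂ (mFourierLp 2 k)).comp toL2

lemma torusCoeff_apply (k : d → ℤ) (F : C(UnitAddTorus d, ℂ)) :
    torusCoeff k F = inner ℂ (toL2 (mFourier k)) (toL2 F) := rfl

lemma torusCoeff_eq_repr (k : d → ℤ) (F : C(UnitAddTorus d, ℂ)) :
    torusCoeff k F = mFourierBasis.repr (toL2 F) k := by
  rw [HilbertBasis.repr_apply_apply, coe_mFourierBasis, torusCoeff_apply]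

lemma torusCoeff_eq_mFourierCoeff (k : d → ℤ) (F : C(UnitAddTorus d, ℂ)) :
    torusCoeff k F = mFourierCoeff F k := by
  rw [torusCoeff_eq_repr, mFourierBasis_repr, mFourierCoeff_toLp]

lemma torusCoeff_mFourier (k j : d → ℤ) :
    torusCoeff k (mFourier j) = if k = j then 1 else 0 :=
  orthonormal_iff_ite.mp orthonormal_mFourier k j

lemma mFourier_mul_mFourier (m n : d → ℤ) : mFourier m * mFourier n = mFourier (m + n) := by
  ext t
  rw [mFourier_add, ContinuousMap.mul_apply]

lemma norm_mFourier_apply (k : d → ℤ) (x : UnitAddTorus d) : ‖mFourier k x‖ = 1 := by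
  simp only [mFourier, fourier_apply, ContinuousMap.coe_mk, norm_prod, Circle.norm_coe,
    Finset.prod_const_one]

lemma tsum_enorm_torusCoeff_sq (F : C(UnitAddTorus d, ℂ)) :
    ∑' k, ‖torusCoeff k F‖ₑ ^ 2 = ‖toL2 F‖ₑ ^ 2 := by
  have parseval : HasSum (fun k => ‖torusCoeff k F‖ ^ 2) (‖toL2 F‖ ^ 2) := by
    simpa [torusCoeff_eq_repr] using
      lp.hasSum_norm (p := 2) (by norm_num) (mFourierBasis.repr (toL2 F))
  simp_rw [← ofReal_norm, ← ENNReal.ofReal_pow (norm_nonneg _)]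
  rw [← parseval.tsum_eq, ENNReal.ofReal_tsum_of_nonneg (fun _ => by positivity) parseval.summable]

lemma norm_toL2_mul_le (F G : C(UnitAddTorus d, ℂ)) : ‖toL2 (F * G)‖ ≤ ‖F‖ * ‖toL2 G‖ := by
  refine Lp.norm_le_mul_norm_of_ae_le_mul ?_
  filter_upwards [ContinuousMap.coeFn_toLp (p := 2) (𝕜 := ℂ) volume (F * G),
    ContinuousMap.coeFn_toLp (p := 2) (𝕜 := ℂ) volume G] with t hFG hG
  rw [hFG, hG, ContinuousMap.mul_apply, norm_mul]
  exact mul_le_mul_of_nonneg_right (F.norm_coe_le_norm t) (norm_nonneg _)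

lemma inner_toL2_mFourier_mul_mFourier (a b : d → ℤ) (F : C(UnitAddTorus d, ℂ)) :
    inner ℂ (toL2 (mFourier b)) (toL2 (F * mFourier a)) = torusCoeff (b - a) F := by
  simp_rw [torusCoeff_apply, toL2, ContinuousMap.inner_toLp]
  congr 1 with t
  rw [← mFourier_neg, ← mFourier_neg, neg_sub, sub_eq_add_neg a b, mFourier_add,
    ContinuousMap.mul_apply]
  ring

/-- The Dirichlet kernel of a finite set `S` of frequencies, centred at `x`. -/
noncomputable def dirichletKernel (S : Finset (d → ℤ)) (x : UnitAddTorus d) :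
    C(UnitAddTorus d, ℂ) :=
  ∑ a ∈ S, conj (mFourier a x) • mFourier a

lemma norm_toL2_dirichletKernel_sq (S : Finset (d → ℤ)) (x : UnitAddTorus d) :
    ‖toL2 (dirichletKernel S x)‖ ^ 2 = #S := by
  have inner_self_eq_card :
      inner ℂ (toL2 (dirichletKernel S x)) (toL2 (dirichletKernel S x)) = (#S : ℂ) := by
    simp only [dirichletKernel, map_sum, map_smul]
    rw [orthonormal_mFourier.inner_sum]
    simp [Complex.mul_conj', norm_mFourier_apply]
  rw [← inner_self_eq_norm_sq (𝕜 := ℂ), inner_self_eq_card, RCLike.natCast_re]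

/-- The de la Vallée Poussin mean of `F`: the average over `a ∈ A` of the partial Fourier sums of
`F` over the translates `B - a`. -/
noncomputable def vallePoussinMean (A B : Finset (d → ℤ)) (F : C(UnitAddTorus d, ℂ)) :
    C(UnitAddTorus d, ℂ) :=
  (#A : ℂ)⁻¹ • ∑ a ∈ A, ∑ b ∈ B, torusCoeff (b - a) F • mFourier (b - a)

lemma vallePoussinMean_apply (A B : Finset (d → ℤ)) (F : C(UnitAddTorus d, ℂ))
    (x : UnitAddTorus d) :
    vallePoussinMean A B F x =
      (#A : ℂ)⁻¹ * inner ℂ (toL2 (dirichletKernel B x)) (toL2 (F * dirichletKernel A x)) := by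
  simp only [vallePoussinMean, dirichletKernel, Finset.mul_sum, mul_smul_comm, map_sum, map_smul,
    sum_inner, inner_sum, inner_smul_left, inner_smul_right, inner_toL2_mFourier_mul_mFourier,
    ContinuousMap.smul_apply, ContinuousMap.sum_apply, smul_eq_mul, Complex.conj_conj]
  congr! 3 with a _ b _
  rw [sub_eq_add_neg, mFourier_add, mFourier_neg]
  ring

lemma norm_vallePoussinMean_le (A B : Finset (d → ℤ)) (F : C(UnitAddTorus d, ℂ)) :
    ‖vallePoussinMean A B F‖ ≤ √(#B / #A) * ‖F‖ := by
  have norm_kernel (S : Finset (d → ℤ)) (x : UnitAddTorus d) :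
      ‖toL2 (dirichletKernel S x)‖ = √(#S) := by
    rw [← norm_toL2_dirichletKernel_sq S x, Real.sqrt_sq (norm_nonneg _)]
  refine (ContinuousMap.norm_le _ (by positivity)).2 fun x => ?_
  calc ‖vallePoussinMean A B F x‖
      ≤ (#A : ℝ)⁻¹ * (√(#B) * (‖F‖ * √(#A))) := by
        rw [vallePoussinMean_apply, norm_mul, norm_inv, Complex.norm_natCast,
          ← norm_kernel A x, ← norm_kernel B x]
        gcongr
        exact (norm_inner_le_norm _ _).trans (by gcongr; exact norm_toL2_mul_le _ _)
    _ = √(#B / #A) * ‖F‖ := by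
        rw [Real.sqrt_div (Nat.cast_nonneg _), div_eq_mul_inv (√_), ← Real.sqrt_div_self]
        ring

lemma torusCoeff_vallePoussinMean (A B : Finset (d → ℤ)) (F : C(UnitAddTorus d, ℂ))
    (k : d → ℤ) :
    torusCoeff k (vallePoussinMean A B F) =
      ((#{a ∈ A | a + k ∈ B} / #A : ℝ) : ℂ) * torusCoeff k F := by
  have coeff_term (a b : d → ℤ) : (torusCoeff (b - a) F * if k = b - a then 1 else 0) =
      if a + k = b then torusCoeff k F else 0 := by
    simp only [eq_sub_iff_add_eq', mul_ite, mul_one, mul_zero]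
    split_ifs with h
    · rw [← h, add_sub_cancel_left]
    · rfl
  simp only [vallePoussinMean, map_smul, map_sum, torusCoeff_mFourier, smul_eq_mul, coeff_term,
    Finset.sum_ite_eq]
  rw [← Finset.sum_filter, Finset.sum_const, nsmul_eq_mul]
  push_cast
  ring

lemma norm_torusCoeff_sub_vallePoussinMean_le (A B : Finset (d → ℤ)) (F : C(UnitAddTorus d, ℂ))
    (k : d → ℤ) : ‖torusCoeff k (F - vallePoussinMean A B F)‖ ≤ ‖torusCoeff k F‖ := by
  have ratio_le_one : (#{a ∈ A | a + k ∈ B} / #A : ℝ) ≤ 1 :=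
    div_le_one_of_le₀ (mod_cast Finset.card_filter_le _ _) (Nat.cast_nonneg _)
  have ratio_nonneg : (0 : ℝ) ≤ #{a ∈ A | a + k ∈ B} / #A := by positivity
  rw [map_sub, torusCoeff_vallePoussinMean, ← one_sub_mul, norm_mul, ← Complex.ofReal_one,
    ← Complex.ofReal_sub, Complex.norm_real, Real.norm_of_nonneg (by linarith)]
  exact mul_le_of_le_one_left (norm_nonneg _) (by linarith)

lemma torusCoeff_sub_vallePoussinMean_eq_zero {A B : Finset (d → ℤ)} (hA : A.Nonempty)
    {k : d → ℤ} (hk : ∀ a ∈ A, a + k ∈ B) (F : C(UnitAddTorus d, ℂ)) :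
    torusCoeff k (F - vallePoussinMean A B F) = 0 := by
  have card_ne_zero : (#A : ℝ) ≠ 0 := mod_cast hA.card_ne_zero
  rw [map_sub, torusCoeff_vallePoussinMean, Finset.filter_true_of_mem hk, div_self card_ne_zero,
    Complex.ofReal_one, one_mul, sub_self]

lemma torusCoeff_vallePoussinMean_mul_eq_zero {A B A' B' : Finset (d → ℤ)} {k : d → ℤ}
    (hk : k ∉ (B - A) + (B' - A')) (F G : C(UnitAddTorus d, ℂ)) :
    torusCoeff k (vallePoussinMean A B F * vallePoussinMean A' B' G) = 0 := by
  simp only [vallePoussinMean, smul_mul_smul_comm, Finset.sum_mul_sum, mFourier_mul_mFourier,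
    map_smul, map_sum, torusCoeff_mFourier]
  rw [Finset.sum_eq_zero, smul_zero]
  refine fun a ha => Finset.sum_eq_zero fun a' ha' => Finset.sum_eq_zero fun b hb =>
    Finset.sum_eq_zero fun b' hb' => ?_
  rw [if_neg, smul_zero]
  rintro rfl
  exact hk (Finset.add_mem_add (Finset.sub_mem_sub hb ha) (Finset.sub_mem_sub hb' ha'))

/-- The largest modulus of a coordinate of the frequency `k`. -/
def freqSize (k : d → ℤ) : ℕ := Finset.univ.sup fun i => (k i).natAbs

lemma natAbs_le_freqSize (k : d → ℤ) (i : d) : (k i).natAbs ≤ freqSize k :=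
  Finset.le_sup (f := fun i => (k i).natAbs) (Finset.mem_univ i)

lemma exists_natAbs_eq_freqSize [Nonempty d] (k : d → ℤ) : ∃ i, (k i).natAbs = freqSize k :=
  let ⟨i, _, hi⟩ := Finset.exists_mem_eq_sup Finset.univ Finset.univ_nonempty fun i => (k i).natAbs
  ⟨i, hi.symm⟩

open scoped Classical in
/-- The discrete cube `[a, b)ᵈ`. -/
noncomputable def frequencyCube (a b : ℤ) : Finset (d → ℤ) :=
  Fintype.piFinset fun _ => Finset.Ico a b

lemma mem_frequencyCube {a b : ℤ} {k : d → ℤ} :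
    k ∈ frequencyCube a b ↔ ∀ i, a ≤ k i ∧ k i < b := by
  simp only [frequencyCube, Fintype.mem_piFinset, Finset.mem_Ico]

lemma card_frequencyCube (a b : ℤ) :
    #(frequencyCube a b : Finset (d → ℤ)) = (b - a).toNat ^ Fintype.card d := by
  simp only [frequencyCube, Fintype.card_piFinset, Int.card_Ico, Finset.prod_const,
    Finset.card_univ]

/-- A smooth cut-off to low frequencies: the Fourier multiplier of `lowPass N` equals `1` on
frequencies of size less than `N` and vanishes on those of size at least `2 * N`. -/
noncomputable def lowPass (N : ℕ) (F : C(UnitAddTorus d, ℂ)) : C(UnitAddTorus d, ℂ) :=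
  vallePoussinMean (frequencyCube 0 N) (frequencyCube (-N) (2 * N)) F

lemma norm_lowPass_le (N : ℕ) (F : C(UnitAddTorus d, ℂ)) :
    ‖lowPass N F‖ ≤ √(3 ^ Fintype.card d) * ‖F‖ := by
  refine (norm_vallePoussinMean_le _ _ F).trans ?_
  gcongr
  rw [card_frequencyCube, card_frequencyCube, show (2 * N - -N : ℤ).toNat = 3 * N by lia,
    show (N - 0 : ℤ).toNat = N by lia]
  push_cast
  rw [mul_pow]
  exact div_le_of_le_mul₀ (by positivity) (by positivity) le_rfl

lemma torusCoeff_sub_lowPass_eq_zero {N : ℕ} {k : d → ℤ} (hk : freqSize k < N)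
    (F : C(UnitAddTorus d, ℂ)) : torusCoeff k (F - lowPass N F) = 0 := by
  refine torusCoeff_sub_vallePoussinMean_eq_zero ⟨0, ?_⟩ (fun a ha => ?_) F
  · simp only [mem_frequencyCube, Pi.zero_apply]
    lia
  · simp only [mem_frequencyCube, Pi.add_apply] at ha ⊢
    intro i
    have := ha i
    have := natAbs_le_freqSize k i
    lia

lemma torusCoeff_lowPass_mul_lowPass_eq_zero [Nonempty d] {N : ℕ} {k : d → ℤ}
    (hk : 4 * N ≤ freqSize k) (F G : C(UnitAddTorus d, ℂ)) :
    torusCoeff k (lowPass N F * lowPass N G) = 0 := by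
  refine torusCoeff_vallePoussinMean_mul_eq_zero (fun hmem => ?_) F G
  obtain ⟨i, hi⟩ := exists_natAbs_eq_freqSize k
  simp only [Finset.mem_add, Finset.mem_sub, mem_frequencyCube] at hmem
  obtain ⟨_, ⟨b, hb, a, ha, rfl⟩, _, ⟨b', hb', a', ha', rfl⟩, rfl⟩ := hmem
  have := ha i
  have := hb i
  have := ha' i
  have := hb' i
  simp only [Pi.add_apply, Pi.sub_apply] at hi
  lia

lemma enorm_toL2_sub_lowPass_sq_le (N : ℕ) (F : C(UnitAddTorus d, ℂ)) :
    ‖toL2 (F - lowPass N F)‖ₑ ^ 2 ≤ ∑' k : {k : d → ℤ | N ≤ freqSize k}, ‖torusCoeff k F‖ₑ ^ 2 := by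
  rw [← tsum_enorm_torusCoeff_sq, tsum_subtype {k : d → ℤ | N ≤ freqSize k} (‖torusCoeff · F‖ₑ ^ 2)]
  refine ENNReal.tsum_le_tsum fun k => Set.le_indicator_apply (fun _ => ?_) fun hk => ?_
  · gcongr
    exact enorm_le_iff_norm_le.2 (norm_torusCoeff_sub_vallePoussinMean_le _ _ F k)
  · simp [torusCoeff_sub_lowPass_eq_zero (not_le.1 hk) F]

lemma tsum_tail_torusCoeff_mul_le_enorm_toL2 [Nonempty d] (N : ℕ) (F G : C(UnitAddTorus d, ℂ)) :
    ∑' k : {k : d → ℤ | N ≤ freqSize k / 4}, ‖torusCoeff k (F * G)‖ₑ ^ 2 ≤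
      ‖toL2 (F * G - lowPass N F * lowPass N G)‖ₑ ^ 2 := by
  rw [← tsum_enorm_torusCoeff_sq,
    tsum_subtype {k : d → ℤ | N ≤ freqSize k / 4} (‖torusCoeff · (F * G)‖ₑ ^ 2)]
  refine ENNReal.tsum_le_tsum fun k => Set.indicator_apply_le' (fun hk => ?_) fun _ => zero_le
  have hk' : 4 * N ≤ freqSize k := by rw [Set.mem_ofPred_eq] at hk; lia
  rw [map_sub, torusCoeff_lowPass_mul_lowPass_eq_zero hk', sub_zero]

lemma norm_toL2_mul_sub_lowPass_mul_lowPass_le (N : ℕ) (F G : C(UnitAddTorus d, ℂ)) :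
    ‖toL2 (F * G - lowPass N F * lowPass N G)‖ ≤
      ‖G‖ * ‖toL2 (F - lowPass N F)‖ +
        √(3 ^ Fintype.card d) * ‖F‖ * ‖toL2 (G - lowPass N G)‖ := by
  rw [show F * G - lowPass N F * lowPass N G =
    G * (F - lowPass N F) + lowPass N F * (G - lowPass N G) by ring, map_add]
  refine (norm_add_le _ _).trans (add_le_add (norm_toL2_mul_le _ _) ?_)
  exact (norm_toL2_mul_le _ _).trans (by gcongr; exact norm_lowPass_le N F)

lemma enorm_toL2_mul_sub_lowPass_mul_lowPass_le (N : ℕ) (F G : C(UnitAddTorus d, ℂ)) :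
    ‖toL2 (F * G - lowPass N F * lowPass N G)‖ₑ ^ 2 ≤
      ENNReal.ofReal (2 * 3 ^ Fintype.card d) *
        (‖G‖ₑ ^ 2 * ‖toL2 (F - lowPass N F)‖ₑ ^ 2 +
          ‖F‖ₑ ^ 2 * ‖toL2 (G - lowPass N G)‖ₑ ^ 2) := by
  set K : ℝ := 3 ^ Fintype.card d
  have one_le_K : 1 ≤ K := one_le_pow₀ (by norm_num)
  have real_bound : ‖toL2 (F * G - lowPass N F * lowPass N G)‖ ^ 2 ≤
      2 * K * (‖G‖ ^ 2 * ‖toL2 (F - lowPass N F)‖ ^ 2 +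
        ‖F‖ ^ 2 * ‖toL2 (G - lowPass N G)‖ ^ 2) := calc
    _ ≤ (‖G‖ * ‖toL2 (F - lowPass N F)‖ + √K * ‖F‖ * ‖toL2 (G - lowPass N G)‖) ^ 2 := by
        gcongr
        exact norm_toL2_mul_sub_lowPass_mul_lowPass_le N F G
    _ ≤ 2 * ((‖G‖ * ‖toL2 (F - lowPass N F)‖) ^ 2 +
          (√K * ‖F‖ * ‖toL2 (G - lowPass N G)‖) ^ 2) := add_sq_le
    _ = 2 * (1 * (‖G‖ ^ 2 * ‖toL2 (F - lowPass N F)‖ ^ 2) +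
          K * (‖F‖ ^ 2 * ‖toL2 (G - lowPass N G)‖ ^ 2)) := by
        rw [mul_pow, mul_pow, mul_pow, Real.sq_sqrt (by positivity)]
        ring
    _ ≤ 2 * (K * (‖G‖ ^ 2 * ‖toL2 (F - lowPass N F)‖ ^ 2) +
          K * (‖F‖ ^ 2 * ‖toL2 (G - lowPass N G)‖ ^ 2)) := by gcongr
    _ = _ := by ring
  simp_rw [← ofReal_norm, ← ENNReal.ofReal_pow (norm_nonneg _)]
  rw [← ENNReal.ofReal_mul (by positivity), ← ENNReal.ofReal_mul (by positivity),
    ← ENNReal.ofReal_add (by positivity) (by positivity), ← ENNReal.ofReal_mul (by positivity)]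
  exact ENNReal.ofReal_le_ofReal real_bound

lemma tsum_tail_torusCoeff_mul_le [Nonempty d] (N : ℕ) (F G : C(UnitAddTorus d, ℂ)) :
    ∑' k : {k : d → ℤ | N ≤ freqSize k / 4}, ‖torusCoeff k (F * G)‖ₑ ^ 2 ≤
      ∑' k : {k : d → ℤ | N ≤ freqSize k}, ENNReal.ofReal (2 * 3 ^ Fintype.card d) *
        (‖G‖ₑ ^ 2 * ‖torusCoeff k F‖ₑ ^ 2 + ‖F‖ₑ ^ 2 * ‖torusCoeff k G‖ₑ ^ 2) := by
  simp_rw [ENNReal.tsum_mul_left, ENNReal.tsum_add, ENNReal.tsum_mul_left]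
  refine (tsum_tail_torusCoeff_mul_le_enorm_toL2 N F G).trans
    ((enorm_toL2_mul_sub_lowPass_mul_lowPass_le N F G).trans ?_)
  gcongr <;> exact enorm_toL2_sub_lowPass_sq_le N _

/-- The square of the `H^s` norm of a continuous function on `𝕋ᵈ`, valued in `[0,∞]`. -/
noncomputable def sobolevEnergy (s : ℝ) (F : C(UnitAddTorus d, ℂ)) : ℝ≥0∞ :=
  ∑' k : d → ℤ, ENNReal.ofReal ((1 + ∑ i, (k i : ℝ) ^ 2) ^ s) * ‖torusCoeff k F‖ₑ ^ 2

lemma freqSize_sq_le_sum_sq [Nonempty d] (k : d → ℤ) :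
    (freqSize k : ℝ) ^ 2 ≤ ∑ i, (k i : ℝ) ^ 2 := by
  obtain ⟨i, hi⟩ := exists_natAbs_eq_freqSize k
  rw [← hi, Nat.cast_natAbs, Int.cast_abs, sq_abs]
  exact Finset.single_le_sum (f := fun i => (k i : ℝ) ^ 2) (fun _ _ => sq_nonneg _)
    (Finset.mem_univ i)

lemma one_add_sum_sq_le_freqSize_div_four (k : d → ℤ) :
    1 + ∑ i, (k i : ℝ) ^ 2 ≤ (25 * Fintype.card d + 1) * (1 + ((freqSize k / 4 : ℕ) : ℝ) ^ 2) := by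
  set m := freqSize k / 4
  have coord_le (i : d) : (k i : ℝ) ^ 2 ≤ 25 * (1 + (m : ℝ) ^ 2) := by
    have abs_le : |(k i : ℝ)| ≤ 4 * m + 3 := by
      have natAbs_le : (k i).natAbs ≤ 4 * m + 3 := (natAbs_le_freqSize k i).trans (by lia)
      rw [← Int.cast_abs, ← Nat.cast_natAbs]
      exact_mod_cast natAbs_le
    calc (k i : ℝ) ^ 2 = |(k i : ℝ)| ^ 2 := (sq_abs _).symm
      _ ≤ (4 * m + 3) ^ 2 := by gcongr
      _ ≤ 25 * (1 + (m : ℝ) ^ 2) := by nlinarith [sq_nonneg (3 * (m : ℝ) - 4)]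
  calc 1 + ∑ i, (k i : ℝ) ^ 2 ≤ 1 + ∑ _i : d, 25 * (1 + (m : ℝ) ^ 2) := by
        gcongr with i
        exact coord_le i
    _ ≤ (25 * Fintype.card d + 1) * (1 + (m : ℝ) ^ 2) := by
        rw [Finset.sum_const, Finset.card_univ, nsmul_eq_mul]
        nlinarith [sq_nonneg (m : ℝ)]

/-- The Sobolev weight `(1 + |k|²)ˢ` as a function of `n = |k|`. It is applied to `freqSize k`,
which is comparable to the Euclidean length of `k`. -/
noncomputable def radialWeight (s : ℝ) (n : ℕ) : ℝ≥0∞ := ENNReal.ofReal ((1 + (n : ℝ) ^ 2) ^ s)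

lemma radialWeight_monotone {s : ℝ} (hs : 0 ≤ s) : Monotone (radialWeight s) := fun m n hmn => by
  unfold radialWeight
  gcongr

lemma tsum_radialWeight_freqSize_le_sobolevEnergy [Nonempty d] {s : ℝ} (hs : 0 ≤ s)
    (F : C(UnitAddTorus d, ℂ)) :
    ∑' k, radialWeight s (freqSize k) * ‖torusCoeff k F‖ₑ ^ 2 ≤ sobolevEnergy s F := by
  unfold sobolevEnergy radialWeight
  gcongr with k
  exact freqSize_sq_le_sum_sq k

lemma sobolevEnergy_le_tsum_radialWeight_freqSize_div_four {s : ℝ} (hs : 0 ≤ s)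
    (F : C(UnitAddTorus d, ℂ)) :
    sobolevEnergy s F ≤ ENNReal.ofReal ((25 * Fintype.card d + 1) ^ s) *
      ∑' k, radialWeight s (freqSize k / 4) * ‖torusCoeff k F‖ₑ ^ 2 := by
  unfold sobolevEnergy radialWeight
  rw [← ENNReal.tsum_mul_left]
  simp_rw [← mul_assoc]
  gcongr with k
  rw [← ENNReal.ofReal_mul (by positivity), ← Real.mul_rpow (by positivity) (by positivity)]
  gcongr
  exact one_add_sum_sq_le_freqSize_div_four k

theorem sobolevEnergy_mul_le [Nonempty d] {s : ℝ} (hs : 0 ≤ s) (F G : C(UnitAddTorus d, ℂ)) :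
    sobolevEnergy s (F * G) ≤
      ENNReal.ofReal ((25 * Fintype.card d + 1) ^ s * (2 * 3 ^ Fintype.card d)) *
        (‖G‖ₑ ^ 2 * sobolevEnergy s F + ‖F‖ₑ ^ 2 * sobolevEnergy s G) := by
  refine (sobolevEnergy_le_tsum_radialWeight_freqSize_div_four hs _).trans ?_
  rw [ENNReal.ofReal_mul (by positivity), mul_assoc]
  gcongr
  set K := ENNReal.ofReal (2 * 3 ^ Fintype.card d)
  calc ∑' k, radialWeight s (freqSize k / 4) * ‖torusCoeff k (F * G)‖ₑ ^ 2
      ≤ ∑' k, radialWeight s (freqSize k) *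
          (K * (‖G‖ₑ ^ 2 * ‖torusCoeff k F‖ₑ ^ 2 + ‖F‖ₑ ^ 2 * ‖torusCoeff k G‖ₑ ^ 2)) :=
        tsum_monotone_comp_mul_le (radialWeight_monotone hs)
          fun N => tsum_tail_torusCoeff_mul_le N F G
    _ = K * (‖G‖ₑ ^ 2 * ∑' k, radialWeight s (freqSize k) * ‖torusCoeff k F‖ₑ ^ 2 +
          ‖F‖ₑ ^ 2 * ∑' k, radialWeight s (freqSize k) * ‖torusCoeff k G‖ₑ ^ 2) := by
        simp_rw [← ENNReal.tsum_mul_left, ← ENNReal.tsum_add, ← ENNReal.tsum_mul_left]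
        congr! 2 with k
        ring
    _ ≤ K * (‖G‖ₑ ^ 2 * sobolevEnergy s F + ‖F‖ₑ ^ 2 * sobolevEnergy s G) := by
        gcongr <;> exact tsum_radialWeight_freqSize_le_sobolevEnergy hs _

lemma fourierCoef_eq_torusCoeff {f : (Fin 2 → ℝ) → ℂ} {F : C(UnitAddTorus (Fin 2), ℂ)}
    (hF : ∀ x : Fin 2 → ℝ, F (fun i => (x i : UnitAddCircle)) = f x) (k : Fin 2 → ℤ) :
    fourierCoef f k = torusCoeff k F := by
  have cube_ae_eq : {x : Fin 2 → ℝ | ∀ i, x i ∈ Set.Ioc ((0 : Fin 2 → ℝ) i)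
      ((0 : Fin 2 → ℝ) i + 1)} =ᵐ[volume] Set.Icc (0 : Fin 2 → ℝ) 1 := by
    simpa [Set.pi, volume_pi] using
      Measure.univ_pi_Ioc_ae_eq_Icc (μ := fun _ : Fin 2 => (volume : Measure ℝ)) (f := 0) (g := 1)
  rw [torusCoeff_eq_mFourierCoeff, mFourierCoeff_eq_integral F k 0, fourierCoef,
    setIntegral_congr_set cube_ae_eq]
  congr 1 with x
  simp only [hF, smul_eq_mul, mFourier, ContinuousMap.coe_mk, fourier_coe_apply,
    ← Complex.exp_sum, Pi.neg_apply, mul_comm (f x)]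
  congr 2
  push_cast
  rw [Finset.mul_sum]
  congr! 1 with i
  ring

lemma sobolevNorm_sq_eq_sobolevEnergy (s : ℝ) {f : (Fin 2 → ℝ) → ℂ}
    {F : C(UnitAddTorus (Fin 2), ℂ)}
    (hF : ∀ x : Fin 2 → ℝ, F (fun i => (x i : UnitAddCircle)) = f x) :
    sobolevNorm s f ^ 2 = sobolevEnergy s F := by
  unfold sobolevNorm sobolevEnergy
  rw [← ENNReal.rpow_mul_natCast, Nat.cast_two, one_div_mul_cancel two_ne_zero, ENNReal.rpow_one]
  congr! 2 with k
  rw [ENNReal.ofReal_mul (by positivity), ENNReal.ofReal_pow (norm_nonneg _), ofReal_norm,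
    fourierCoef_eq_torusCoeff hF]

end Torus

theorem stmt_5_general (s : ℝ) (hs : 0 ≤ s) :
    ∃ C > (0 : ℝ), ∀ f g : (Fin 2 → ℝ) → ℂ,
      Continuous f →
      (∀ (x : Fin 2 → ℝ) (m : Fin 2 → ℤ), f (x + fun i => (m i : ℝ)) = f x) →
      Continuous g →
      (∀ (x : Fin 2 → ℝ) (m : Fin 2 → ℤ), g (x + fun i => (m i : ℝ)) = g x) →
      sobolevNorm s (fun x => f x * g x) ≤
        ENNReal.ofReal C *
          (ENNReal.ofReal (⨆ x : Fin 2 → ℝ, ‖f x‖) * sobolevNorm s g +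
           ENNReal.ofReal (⨆ x : Fin 2 → ℝ, ‖g x‖) * sobolevNorm s f) := by
  set K : ℝ := (25 * Fintype.card (Fin 2) + 1) ^ s * (2 * 3 ^ Fintype.card (Fin 2))
  have K_pos : 0 < K := by positivity
  refine ⟨√K, Real.sqrt_pos.2 K_pos, fun f g hf hfper hg hgper => ?_⟩
  obtain ⟨F, hF⟩ := exists_unitAddTorus_lift hf hfper
  obtain ⟨G, hG⟩ := exists_unitAddTorus_lift hg hgper
  have hFG (x : Fin 2 → ℝ) : (F * G) (fun i => (x i : UnitAddCircle)) = f x * g x := by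
    rw [ContinuousMap.mul_apply, hF, hG]
  rw [← norm_eq_iSup_of_unitAddTorus_lift hF, ← norm_eq_iSup_of_unitAddTorus_lift hG, ofReal_norm,
    ofReal_norm, ← ENNReal.pow_le_pow_left_iff two_ne_zero]
  calc sobolevNorm s (fun x => f x * g x) ^ 2
      ≤ ENNReal.ofReal K * (‖G‖ₑ ^ 2 * sobolevNorm s f ^ 2 + ‖F‖ₑ ^ 2 * sobolevNorm s g ^ 2) := by
        simpa only [sobolevNorm_sq_eq_sobolevEnergy s hFG, sobolevNorm_sq_eq_sobolevEnergy s hF,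
          sobolevNorm_sq_eq_sobolevEnergy s hG] using sobolevEnergy_mul_le hs F G
    _ ≤ ENNReal.ofReal K * (‖F‖ₑ * sobolevNorm s g + ‖G‖ₑ * sobolevNorm s f) ^ 2 := by
        rw [← mul_pow, ← mul_pow, add_comm]
        gcongr
        exact pow_add_pow_le zero_le zero_le two_ne_zero
    _ = (ENNReal.ofReal √K * (‖F‖ₑ * sobolevNorm s g + ‖G‖ₑ * sobolevNorm s f)) ^ 2 := by
        rw [mul_pow (ENNReal.ofReal _), ← ENNReal.ofReal_pow (Real.sqrt_nonneg _),
          Real.sq_sqrt K_pos.le]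

/-- Lemma 2.2 (Kato–Ponce type product estimate on `T²`): for `s ≥ 0` there is `C > 0`
with `‖fg‖_{H^s} ≤ C(‖f‖_{L^∞}‖g‖_{H^s} + ‖g‖_{L^∞}‖f‖_{H^s})` for all smooth
`ℤ²`-periodic `f, g`. -/
theorem stmt_5 (s : ℝ) (hs : 0 ≤ s) :
    ∃ C > (0 : ℝ), ∀ f g : (Fin 2 → ℝ) → ℂ,
      ContDiff ℝ (⊤ : ℕ∞) f →
      (∀ (x : Fin 2 → ℝ) (m : Fin 2 → ℤ), f (x + fun i => (m i : ℝ)) = f x) →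
      ContDiff ℝ (⊤ : ℕ∞) g →
      (∀ (x : Fin 2 → ℝ) (m : Fin 2 → ℤ), g (x + fun i => (m i : ℝ)) = g x) →
      sobolevNorm s (fun x => f x * g x) ≤
        ENNReal.ofReal C *
          (ENNReal.ofReal (⨆ x : Fin 2 → ℝ, ‖f x‖) * sobolevNorm s g +
           ENNReal.ofReal (⨆ x : Fin 2 → ℝ, ‖g x‖) * sobolevNorm s f) :=
  let ⟨C, hC, hfg⟩ := stmt_5_general s hs
  ⟨C, hC, fun f g hf hfper hg hgper => hfg f g hf.continuous hfper hg.continuous hgper⟩
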